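/- Let ℓ be a permutation invariant loss function (ℓ(x) = ℓ(π(x)) for every coordinate permutation π). Then for every X ∈ M^θ a risk allocation exists: there is m* ∈ ℝ^d with E[ℓ(X − m*)] ≤ 0 and ∑_k m*_k = R(X), i.e., the infimum defining R(X) is attained. -/

import Mathlib

/-!
By Jensen's inequality every acceptable `m` satisfies `ℓ (E[X] - m) ≤ 0`, so minimizing sequences
are controlled by the deterministic sublevel set `{ℓ ≤ 0}`. If the part of this set with
`∑ k, x k ≥ b` is unbounded for some `b`, normalizing a divergent sequence in it produces a
nonzero recession direction `u` of `ℓ`; as `∑ k, x k ≤ c` on the sublevel set, `u` has zero sum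
(`IsLossFunction.recDir_of_tendsto`). The sum of all rearrangements of `u` vanishes, so `-u` is a
sum of rearrangements of `u` and `ℓ` is constant along `u` (`RecDir.mem_lineality`). The space of
directions along which `ℓ` is constant is permutation invariant, hence contains every zero-sum
vector (`lineality_of_sum_eq_zero`).

Therefore (`IsLossFunction.lineality_or_isBounded`) either `ℓ` depends on `∑ k, x k` only, and any
acceptable `m` may be replaced by the constant allocation with the same total, or the acceptable
allocations of bounded total form a bounded set. In both cases the infimum may be taken over a
bounded part of the acceptance set, which is closed by Fatou's lemma (`isClosed_acceptSet`) and
nonempty since large constants are acceptable (`acceptSet_nonempty`); compactness concludes.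
-/


open MeasureTheory ENNReal Pointwise

/-- The positive part of an extended real number, valued in `ℝ≥0∞`. -/
noncomputable def ERealPos (e : EReal) : ℝ≥0∞ := (max e 0).abs

/-- Extended expectation of a `(-∞,∞]`-valued integrand, as an extended real. -/
noncomputable def eexp {Ω : Type*} [MeasurableSpace Ω] (P : Measure Ω)
    (g : Ω → EReal) : EReal :=
  ((∫⁻ ω, ERealPos (g ω) ∂P) : EReal) - ((∫⁻ ω, ERealPos (-(g ω)) ∂P) : EReal)

/-- A loss function `ℓ : ℝ^d → (-∞,∞]` with constant `c` as in (A3):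
(A1) increasing, (A2) convex, lower semicontinuous with `inf ℓ < 0`,
(A3) `ℓ x ≥ ∑ₖ xₖ - c`. -/
structure IsLossFunction {d : ℕ} (ℓ : (Fin d → ℝ) → EReal) (c : ℝ) : Prop where
  mono : Monotone ℓ
  convex : ∀ x y : Fin d → ℝ, ∀ a b : ℝ, 0 ≤ a → 0 ≤ b → a + b = 1 →
    ℓ (a • x + b • y) ≤ (a : EReal) * ℓ x + (b : EReal) * ℓ y
  lsc : LowerSemicontinuous ℓ
  inf_lt_zero : (⨅ x, ℓ x) < 0
  lower_bound : ∀ x, ((∑ k, x k : ℝ) : EReal) - (c : EReal) ≤ ℓ x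

/-- Membership in the Orlicz heart `M^θ` where `θ x = ℓ |x|`:
`X` is measurable and `E[θ(λX)] < ∞` for all `λ > 0`. -/
def MemOrliczHeart {Ω : Type*} [MeasurableSpace Ω] {d : ℕ}
    (ℓ : (Fin d → ℝ) → EReal) (P : Measure Ω) (X : Ω → Fin d → ℝ) : Prop :=
  Measurable X ∧ ∀ lam : ℝ, 0 < lam → eexp P (fun ω => ℓ |lam • X ω|) < ⊤

/-- The acceptance set `A(X) = {m : E[ℓ(X - m)] ≤ 0}`. -/
def acceptSet {Ω : Type*} [MeasurableSpace Ω] {d : ℕ}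
    (ℓ : (Fin d → ℝ) → EReal) (P : Measure Ω) (X : Ω → Fin d → ℝ) : Set (Fin d → ℝ) :=
  {m | eexp P (fun ω => ℓ (X ω - m)) ≤ 0}

/-- The multivariate shortfall risk `R(X) = inf {∑ₖ mₖ : m ∈ A(X)}`. -/
noncomputable def shortfallRisk {Ω : Type*} [MeasurableSpace Ω] {d : ℕ}
    (ℓ : (Fin d → ℝ) → EReal) (P : Measure Ω) (X : Ω → Fin d → ℝ) : ℝ :=
  sInf {s : ℝ | ∃ m ∈ acceptSet ℓ P X, s = ∑ k, m k}

/-! ### Recession directions of permutation invariant loss functions -/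

/-- The directions along which `ℓ` never increases, from whatever starting point. -/
def RecDir {d : ℕ} (ℓ : (Fin d → ℝ) → EReal) (u : Fin d → ℝ) : Prop :=
  ∀ x : Fin d → ℝ, ∀ r : ℝ, 0 ≤ r → ℓ (x + r • u) ≤ ℓ x

/-- The lineality space of `ℓ`: the directions along which `ℓ` is constant. -/
def lineality {d : ℕ} (ℓ : (Fin d → ℝ) → EReal) : Submodule ℝ (Fin d → ℝ) where
  carrier := {u | ∀ x : Fin d → ℝ, ∀ r : ℝ, ℓ (x + r • u) = ℓ x}
  add_mem' := by
    intro u v hu hv x r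
    rw [smul_add, ← add_assoc, hv, hu]
  zero_mem' := by intro x r; simp
  smul_mem' := by
    intro a u hu x r
    rw [smul_smul, hu]

section Deterministic

open Filter Topology

variable {d : ℕ} {ℓ : (Fin d → ℝ) → EReal} {c : ℝ}

lemma IsLossFunction.ne_bot (hℓ : IsLossFunction ℓ c) (x : Fin d → ℝ) : ℓ x ≠ ⊥ := by
  intro h
  have := hℓ.lower_bound x
  rw [h, le_bot_iff, ← EReal.coe_sub] at this
  exact EReal.coe_ne_bot _ this

lemma IsLossFunction.sum_sub_le (hℓ : IsLossFunction ℓ c) {x : Fin d → ℝ} {t : ℝ}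
    (h : ℓ x ≤ t) : ∑ k, x k - c ≤ t := by
  have := (hℓ.lower_bound x).trans h
  rw [← EReal.coe_sub] at this
  exact_mod_cast this

/-- Asymptotic directions of the sublevel set `{ℓ ≤ 0}` are recession directions of `ℓ`: convex
combinations of `x` with far away points of the sublevel set tend to `x + r • u`, and lower
semicontinuity transfers the convexity bound to the limit. -/
lemma IsLossFunction.recDir_of_tendsto (hℓ : IsLossFunction ℓ c) {y : ℕ → Fin d → ℝ} {t : ℕ → ℝ}
    {u : Fin d → ℝ} (ht : Tendsto t atTop atTop) (hy : ∀ n, ℓ (y n) ≤ 0)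
    (hu : Tendsto (fun n => (t n)⁻¹ • y n) atTop (𝓝 u)) : RecDir ℓ u := by
  intro x r hr
  by_cases hx : ℓ x = ⊤
  · rw [hx]; exact le_top
  obtain ⟨a, ha⟩ : ∃ a : ℝ, ℓ x = a := ⟨_, (EReal.coe_toReal hx (hℓ.ne_bot x)).symm⟩
  have hrt : Tendsto (fun n => r * (t n)⁻¹) atTop (𝓝 0) := by
    simpa using (tendsto_inv_atTop_zero.comp ht).const_mul r
  have hrt' : Tendsto (fun n => 1 - r * (t n)⁻¹) atTop (𝓝 1) := by
    simpa using hrt.const_sub 1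
  have hz : Tendsto (fun n => (1 - r * (t n)⁻¹) • x + (r * (t n)⁻¹) • y n) atTop
      (𝓝 (x + r • u)) := by
    have h2 := (hrt'.smul_const x).add (hu.const_smul r)
    simpa [mul_smul] using h2
  have hb : Tendsto (fun n => (((1 - r * (t n)⁻¹) * a : ℝ) : EReal)) atTop (𝓝 (a : EReal)) := by
    have h2 := hrt'.mul_const a
    rw [one_mul] at h2
    exact (continuous_coe_real_ereal.tendsto a).comp h2
  rw [ha]
  refine hℓ.lsc.isClosed_epigraph.mem_of_tendsto (hz.prodMk_nhds hb) ?_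
  filter_upwards [ht.eventually_gt_atTop 0, hrt.eventually_le_const (zero_lt_one)] with n hn hn1
  have h0 : 0 ≤ r * (t n)⁻¹ := by positivity
  refine (hℓ.convex x (y n) _ _ (by linarith) h0 (by ring)).trans ?_
  rw [ha, EReal.coe_mul]
  have h3 : ((r * (t n)⁻¹ : ℝ) : EReal) * ℓ (y n) ≤ 0 := by
    have := mul_le_mul_of_nonneg_left (hy n) (EReal.coe_nonneg.2 h0)
    simpa using this
  simpa using add_le_add_right h3 _

lemma RecDir.add {u v : Fin d → ℝ} (hu : RecDir ℓ u) (hv : RecDir ℓ v) : RecDir ℓ (u + v) := by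
  intro x r hr
  rw [smul_add, ← add_assoc]
  exact (hv _ r hr).trans (hu x r hr)

lemma RecDir.sum {ι : Type*} (s : Finset ι) (f : ι → Fin d → ℝ) (h : ∀ i, RecDir ℓ (f i)) :
    RecDir ℓ (∑ i ∈ s, f i) := by
  classical
  induction s using Finset.induction_on with
  | empty => intro x r _; simp
  | insert i s hi ih => rw [Finset.sum_insert hi]; exact (h i).add ih

lemma apply_add_smul_comp_perm
    (hperm : ∀ (π : Equiv.Perm (Fin d)) (x : Fin d → ℝ), ℓ (fun k => x (π k)) = ℓ x)
    (π : Equiv.Perm (Fin d)) (x u : Fin d → ℝ) (r : ℝ) :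
    ℓ (x + r • (fun k => u (π k))) = ℓ ((fun k => x (π.symm k)) + r • u) := by
  rw [← hperm π ((fun k => x (π.symm k)) + r • u)]
  congr 1
  ext k
  simp

lemma RecDir.comp_perm
    (hperm : ∀ (π : Equiv.Perm (Fin d)) (x : Fin d → ℝ), ℓ (fun k => x (π k)) = ℓ x)
    {u : Fin d → ℝ} (hu : RecDir ℓ u) (π : Equiv.Perm (Fin d)) :
    RecDir ℓ (fun k => u (π k)) := by
  intro x r hr
  rw [apply_add_smul_comp_perm hperm]
  exact (hu _ r hr).trans_eq (hperm π.symm x)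

lemma lineality_comp_perm
    (hperm : ∀ (π : Equiv.Perm (Fin d)) (x : Fin d → ℝ), ℓ (fun k => x (π k)) = ℓ x)
    {u : Fin d → ℝ} (hu : u ∈ lineality ℓ) (π : Equiv.Perm (Fin d)) :
    (fun k => u (π k)) ∈ lineality ℓ := by
  intro x r
  rw [apply_add_smul_comp_perm hperm]
  exact (hu _ r).trans (hperm π.symm x)

lemma sum_perm_eq_zero {u : Fin d → ℝ} (hu : ∑ k, u k = 0) :
    ∑ π : Equiv.Perm (Fin d), (fun k => u (π k)) = 0 := by
  ext k
  rw [Finset.sum_apply, Pi.zero_apply]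
  -- By reindexing, the sum over permutations does not depend on `k`.
  have hconst : ∀ j, ∑ π : Equiv.Perm (Fin d), u (π j) = ∑ π : Equiv.Perm (Fin d), u (π k) := by
    intro j
    refine Fintype.sum_equiv (Equiv.mulRight (Equiv.swap k j)) _ _ ?_
    intro π
    simp
  have hsum : ∑ j, ∑ π : Equiv.Perm (Fin d), u (π j) = 0 := by
    rw [Finset.sum_comm]
    refine Finset.sum_eq_zero fun π _ => ?_
    rw [Equiv.sum_comp π u, hu]
  simp only [hconst, Finset.sum_const, Finset.card_univ, Fintype.card_fin, nsmul_eq_mul] at hsum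
  have hd : (d : ℝ) ≠ 0 := by
    have := k.pos
    positivity
  exact (mul_eq_zero.1 hsum).resolve_left hd

/-- A zero-sum recession direction `u` is a lineality direction, since `-u` is the sum of the
other rearrangements of `u`. -/
lemma RecDir.mem_lineality
    (hperm : ∀ (π : Equiv.Perm (Fin d)) (x : Fin d → ℝ), ℓ (fun k => x (π k)) = ℓ x)
    {u : Fin d → ℝ} (hu : RecDir ℓ u) (hsum : ∑ k, u k = 0) : u ∈ lineality ℓ := by
  have hneg : RecDir ℓ (-u) := by
    have h := sum_perm_eq_zero hsum
    rw [← Finset.add_sum_erase _ _ (Finset.mem_univ (1 : Equiv.Perm (Fin d)))] at h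
    have h' : -u = _ := neg_eq_of_add_eq_zero_right h
    rw [h']
    exact RecDir.sum _ _ fun π => hu.comp_perm hperm π
  intro x r
  rcases le_total 0 r with hr | hr
  · refine le_antisymm (hu x r hr) ?_
    simpa using hneg (x + r • u) r hr
  · have hr' : 0 ≤ -r := by linarith
    refine le_antisymm ?_ ?_
    · simpa using hneg x (-r) hr'
    · simpa using hu (x + r • u) (-r) hr'

/-- The zero-sum hyperplane is irreducible under permutations: once the lineality space contains
one nonzero zero-sum vector, it contains all of them. -/
lemma lineality_of_sum_eq_zero
    (hperm : ∀ (π : Equiv.Perm (Fin d)) (x : Fin d → ℝ), ℓ (fun k => x (π k)) = ℓ x)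
    {u : Fin d → ℝ} (hu : u ∈ lineality ℓ) (hsum : ∑ k, u k = 0) (hu0 : u ≠ 0)
    {v : Fin d → ℝ} (hv : ∑ k, v k = 0) : v ∈ lineality ℓ := by
  obtain ⟨i, j, hij⟩ : ∃ i j, u i ≠ u j := by
    by_contra! h
    obtain ⟨i, hi⟩ := Function.ne_iff.1 hu0
    have hd : (d : ℝ) ≠ 0 := by
      have := i.pos
      positivity
    rw [Finset.sum_congr rfl fun k _ => h k i] at hsum
    simp only [Finset.sum_const, Finset.card_univ, Fintype.card_fin, nsmul_eq_mul] at hsum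
    exact hi ((mul_eq_zero.1 hsum).resolve_left hd)
  have hne : i ≠ j := fun h => hij (by rw [h])
  -- Subtracting from `u` its image under the transposition of `i` and `j` isolates `e i - e j`.
  have h1 : (Pi.single i 1 - Pi.single j 1 : Fin d → ℝ) ∈ lineality ℓ := by
    have h := (lineality ℓ).smul_mem (u i - u j)⁻¹
      ((lineality ℓ).sub_mem hu (lineality_comp_perm hperm hu (Equiv.swap i j)))
    convert h using 1
    have h0 : u i - u j ≠ 0 := sub_ne_zero.2 hij
    ext k
    simp only [Pi.sub_apply, Pi.smul_apply, smul_eq_mul, Pi.single_apply]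
    by_cases hki : k = i
    · subst hki
      simp [hne, h0]
    by_cases hkj : k = j
    · subst hkj
      simp only [hki, if_false, if_true, Equiv.swap_apply_right]
      field_simp
      ring
    · simp [hki, hkj, Equiv.swap_apply_of_ne_of_ne hki hkj]
  have h2 : ∀ k, (Pi.single k 1 - Pi.single j 1 : Fin d → ℝ) ∈ lineality ℓ := by
    intro k
    by_cases hkj : k = j
    · subst hkj; simp
    have h := lineality_comp_perm hperm h1 (Equiv.swap i k)
    convert h using 1
    ext l
    simp only [Pi.sub_apply, Pi.single_apply]
    congr 1
    · congr 1
      rw [Equiv.swap_apply_eq_iff, Equiv.swap_apply_left]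
    · congr 1
      rw [Equiv.swap_apply_eq_iff, Equiv.swap_apply_of_ne_of_ne hne.symm (Ne.symm hkj)]
  have h3 : v = ∑ k, v k • (Pi.single k 1 - Pi.single j 1 : Fin d → ℝ) := by
    simp only [smul_sub, Finset.sum_sub_distrib, ← Finset.sum_smul, hv, zero_smul, sub_zero]
    ext l
    simp [Finset.sum_apply, Pi.single_apply]
  rw [h3]
  exact (lineality ℓ).sum_mem fun k _ => (lineality ℓ).smul_mem _ (h2 k)

/-- The dichotomy behind the theorem: either `ℓ` depends on `∑ k, x k` only, or the sublevel
set `{ℓ ≤ 0}` has bounded intersection with every upper half-space of the sum. -/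
lemma IsLossFunction.lineality_or_isBounded (hℓ : IsLossFunction ℓ c)
    (hperm : ∀ (π : Equiv.Perm (Fin d)) (x : Fin d → ℝ), ℓ (fun k => x (π k)) = ℓ x) :
    (∀ v : Fin d → ℝ, ∑ k, v k = 0 → ∀ x, ℓ (x + v) = ℓ x) ∨
      ∀ b : ℝ, Bornology.IsBounded {y : Fin d → ℝ | ℓ y ≤ 0 ∧ b ≤ ∑ k, y k} := by
  refine or_iff_not_imp_right.2 fun h => ?_
  push Not at h
  obtain ⟨b, hb⟩ := h
  have hex : ∀ n : ℕ, ∃ y : Fin d → ℝ, (ℓ y ≤ 0 ∧ b ≤ ∑ k, y k) ∧ (n : ℝ) + 1 < ‖y‖ := by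
    intro n
    by_contra! hn
    exact hb (isBounded_iff_forall_norm_le.2 ⟨n + 1, fun y hy => hn y hy⟩)
  choose y hy hyn using hex
  have hpos : ∀ n, 0 < ‖y n‖ := fun n => lt_trans (by positivity) (hyn n)
  have hnorm : Tendsto (fun n => ‖y n‖) atTop atTop :=
    tendsto_atTop_mono (fun n => (by linarith [hyn n] : (n : ℝ) ≤ ‖y n‖))
      tendsto_natCast_atTop_atTop
  have hsphere : ∀ n, ‖y n‖⁻¹ • y n ∈ Metric.sphere (0 : Fin d → ℝ) 1 := by
    intro n
    rw [mem_sphere_zero_iff_norm, norm_smul, norm_inv, norm_norm, inv_mul_cancel₀ (hpos n).ne']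
  obtain ⟨u, hu, φ, hφ, hlim⟩ := (isCompact_sphere (0 : Fin d → ℝ) 1).tendsto_subseq hsphere
  have hnφ := hnorm.comp hφ.tendsto_atTop
  have hrec : RecDir ℓ u :=
    hℓ.recDir_of_tendsto (y := y ∘ φ) hnφ (fun n => (hy _).1) hlim
  -- The sums of the `y n` lie in `[b, c]`, so they vanish after normalization.
  have hsum : ∑ k, u k = 0 := by
    have h1 : Tendsto (fun n => ∑ k, (‖y (φ n)‖⁻¹ • y (φ n)) k) atTop (𝓝 (∑ k, u k)) :=
      tendsto_finsetSum _ fun k _ => (tendsto_pi_nhds.1 hlim) k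
    refine tendsto_nhds_unique h1 ?_
    have hinv : Tendsto (fun n => ‖y (φ n)‖⁻¹) atTop (𝓝 0) := tendsto_inv_atTop_zero.comp hnφ
    refine tendsto_of_tendsto_of_tendsto_of_le_of_le (g := fun n => ‖y (φ n)‖⁻¹ * b)
      (h := fun n => ‖y (φ n)‖⁻¹ * c) (by simpa using hinv.mul_const b)
      (by simpa using hinv.mul_const c) ?_ ?_
    · intro n
      simp only [Pi.smul_apply, smul_eq_mul, ← Finset.mul_sum]
      exact mul_le_mul_of_nonneg_left (hy _).2 (inv_nonneg.2 (norm_nonneg _))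
    · intro n
      simp only [Pi.smul_apply, smul_eq_mul, ← Finset.mul_sum]
      refine mul_le_mul_of_nonneg_left ?_ (inv_nonneg.2 (norm_nonneg _))
      have := hℓ.sum_sub_le (t := 0) (by simpa using (hy (φ n)).1)
      linarith
  have hu0 : u ≠ 0 := by
    rintro rfl
    simp at hu
  intro v hv x
  simpa using lineality_of_sum_eq_zero hperm (hrec.mem_lineality hperm hsum) hsum hu0 hv x 1

end Deterministic

/-! ### Expected loss and the acceptance set -/

section Expectation

open Filter Topology

variable {Ω : Type*} [MeasurableSpace Ω] {P : Measure Ω} {d : ℕ} {ℓ : (Fin d → ℝ) → EReal} {c : ℝ}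
  {X : Ω → Fin d → ℝ}

lemma ERealPos_eq (e : EReal) : ERealPos e = e.toENNReal := by
  induction e with
  | bot => simp [ERealPos]
  | top => simp [ERealPos]
  | coe x =>
    rw [ERealPos, EReal.real_coe_toENNReal, ← EReal.coe_zero, ← EReal.coe_strictMono.monotone.map_max, EReal.abs_def,
      abs_of_nonneg (le_max_right _ _), ENNReal.ofReal_max]
    simp

lemma mem_acceptSet_iff {m : Fin d → ℝ} : m ∈ acceptSet ℓ P X ↔
    ∫⁻ ω, (ℓ (X ω - m)).toENNReal ∂P ≤ ∫⁻ ω, (-ℓ (X ω - m)).toENNReal ∂P := by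
  simp only [acceptSet, eexp, Set.mem_ofPred_eq, EReal.sub_nonpos, ERealPos_eq,
    EReal.coe_ennreal_le_coe_ennreal_iff]

lemma IsLossFunction.neg_toENNReal_le (hℓ : IsLossFunction ℓ c) (x : Fin d → ℝ) :
    (-ℓ x).toENNReal ≤ ENNReal.ofReal (c - ∑ k, x k) := by
  rw [← EReal.real_coe_toENNReal]
  refine EReal.toENNReal_le_toENNReal ?_
  have h := EReal.neg_le_neg_iff.2 (hℓ.lower_bound x)
  rw [← EReal.coe_sub, ← EReal.coe_neg, neg_sub] at h
  exact h

lemma MemOrliczHeart.lintegral_ne_top [IsProbabilityMeasure P] (hℓ : IsLossFunction ℓ c)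
    (hX : MemOrliczHeart ℓ P X) : ∫⁻ ω, (ℓ |X ω|).toENNReal ∂P ≠ ⊤ := by
  have h := hX.2 1 one_pos
  simp only [eexp, one_smul, ERealPos_eq] at h
  have hneg : ∫⁻ ω, (-ℓ |X ω|).toENNReal ∂P ≠ ⊤ := by
    refine ne_top_of_le_ne_top (b := ENNReal.ofReal |c|) ENNReal.ofReal_ne_top ?_
    calc ∫⁻ ω, (-ℓ |X ω|).toENNReal ∂P ≤ ∫⁻ _, ENNReal.ofReal |c| ∂P := by
          refine lintegral_mono fun ω => (hℓ.neg_toENNReal_le _).trans ?_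
          refine ENNReal.ofReal_le_ofReal ?_
          have : 0 ≤ ∑ k, |X ω| k := Finset.sum_nonneg fun k _ => by
            rw [Pi.abs_apply]; exact abs_nonneg _
          linarith [le_abs_self c]
      _ = ENNReal.ofReal |c| := by simp
  intro htop
  rw [htop] at h
  lift ∫⁻ ω, (-ℓ |X ω|).toENNReal ∂P to NNReal using hneg with a
  have ha : (((a : ℝ≥0∞) : EReal)) = ((a : ℝ) : EReal) := rfl
  rw [ha, EReal.coe_ennreal_top, EReal.top_sub_coe] at h
  exact lt_irrefl _ h

lemma MemOrliczHeart.integrable [IsProbabilityMeasure P] (hℓ : IsLossFunction ℓ c)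
    (hX : MemOrliczHeart ℓ P X) : Integrable X P := by
  refine ⟨hX.1.aestronglyMeasurable, ?_⟩
  have hle : ∀ ω, ‖X ω‖ₑ ≤ (ℓ |X ω|).toENNReal + ENNReal.ofReal |c| := by
    intro ω
    have h1 : ‖X ω‖ ≤ ∑ k, |X ω| k := by
      refine (pi_norm_le_iff_of_nonneg (Finset.sum_nonneg fun k _ => by
        rw [Pi.abs_apply]; exact abs_nonneg _)).2 fun k => ?_
      rw [Real.norm_eq_abs, ← Pi.abs_apply]
      exact Finset.single_le_sum (f := fun k => |X ω| k)
        (fun k _ => by rw [Pi.abs_apply]; exact abs_nonneg _) (Finset.mem_univ k)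
    have h2 : ENNReal.ofReal (∑ k, |X ω| k - c) ≤ (ℓ |X ω|).toENNReal := by
      rw [← EReal.real_coe_toENNReal]
      refine EReal.toENNReal_le_toENNReal ?_
      rw [EReal.coe_sub]
      exact hℓ.lower_bound _
    rw [← ofReal_norm]
    calc ENNReal.ofReal ‖X ω‖ ≤ ENNReal.ofReal ((∑ k, |X ω| k - c) + |c|) :=
          ENNReal.ofReal_le_ofReal (by linarith [le_abs_self c])
      _ ≤ _ := ENNReal.ofReal_add_le.trans (by gcongr)
  refine (lintegral_mono hle).trans_lt ?_
  rw [lintegral_add_right _ measurable_const]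
  simp [(hX.lintegral_ne_top hℓ).lt_top]

lemma IsLossFunction.measurable_sub (hℓ : IsLossFunction ℓ c) (hX : Measurable X)
    (m : Fin d → ℝ) : Measurable fun ω => ℓ (X ω - m) :=
  hℓ.lsc.measurable.comp (hX.sub_const m)

lemma lintegral_bound_ne_top [IsFiniteMeasure P] (hX : Integrable X P) (a : ℝ) :
    ∫⁻ ω, ENNReal.ofReal (a + ∑ k, |X ω k|) ∂P ≠ ⊤ := by
  have : Integrable (fun ω => a + ∑ k, |X ω k|) P :=
    (integrable_const a).add (integrable_finsetSum _ fun k _ => (hX.eval k).abs)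
  exact this.lintegral_lt_top.ne

lemma IsLossFunction.neg_toENNReal_sub_le (hℓ : IsLossFunction ℓ c) {m : Fin d → ℝ} {a : ℝ}
    (hm : ∑ k, m k ≤ a) (x : Fin d → ℝ) :
    (-ℓ (x - m)).toENNReal ≤ ENNReal.ofReal (c + a + ∑ k, |x k|) := by
  refine (hℓ.neg_toENNReal_le _).trans (ENNReal.ofReal_le_ofReal ?_)
  have h : ∑ k, -|x k| ≤ ∑ k, x k := Finset.sum_le_sum fun k _ => neg_abs_le _
  rw [Finset.sum_neg_distrib] at h
  simp only [Pi.sub_apply, Finset.sum_sub_distrib]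
  linarith

/-- Jensen's inequality for acceptable allocations: the deterministic position `E[X] - m` lies
in the sublevel set `{ℓ ≤ 0}`. -/
lemma IsLossFunction.jensen [IsProbabilityMeasure P] (hℓ : IsLossFunction ℓ c)
    (hXm : Measurable X) (hX : Integrable X P) {m : Fin d → ℝ} (hm : m ∈ acceptSet ℓ P X) :
    ℓ ((∫ ω, X ω ∂P) - m) ≤ 0 := by
  rw [mem_acceptSet_iff] at hm
  have hmeas := hℓ.measurable_sub hXm m
  have hneg : ∫⁻ ω, (-ℓ (X ω - m)).toENNReal ∂P ≠ ⊤ :=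
    ne_top_of_le_ne_top (lintegral_bound_ne_top hX _)
      (lintegral_mono fun ω => hℓ.neg_toENNReal_sub_le le_rfl (X ω))
  have hpos := ne_top_of_le_ne_top hneg hm
  have hpm : Measurable fun ω => (ℓ (X ω - m)).toENNReal := hmeas.ereal_toENNReal
  have hnm : Measurable fun ω => (-ℓ (X ω - m)).toENNReal := hmeas.neg.ereal_toENNReal
  set g : Ω → ℝ := fun ω => (ℓ (X ω - m)).toENNReal.toReal - (-ℓ (X ω - m)).toENNReal.toReal with hg
  have hgi1 := integrable_toReal_of_lintegral_ne_top hpm.aemeasurable hpos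
  have hgi2 := integrable_toReal_of_lintegral_ne_top hnm.aemeasurable hneg
  have hgi : Integrable g P := hgi1.sub hgi2
  have hg0 : ∫ ω, g ω ∂P ≤ 0 := by
    rw [hg, integral_sub hgi1 hgi2, integral_toReal hpm.aemeasurable (ae_lt_top hpm hpos),
      integral_toReal hnm.aemeasurable (ae_lt_top hnm hneg)]
    linarith [ENNReal.toReal_mono hneg hm]
  -- The set is the real epigraph of `ℓ`, which is closed and convex.
  let s : Set ((Fin d → ℝ) × ℝ) := {p | ℓ p.1 ≤ (p.2 : EReal)}
  have hs : IsClosed s := by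
    have hc : Continuous fun p : (Fin d → ℝ) × ℝ => (p.1, (p.2 : EReal)) :=
      continuous_fst.prodMk (continuous_coe_real_ereal.comp continuous_snd)
    exact hℓ.lsc.isClosed_epigraph.preimage hc
  have hsc : Convex ℝ s := by
    intro p hp q hq a b ha hb hab
    refine (hℓ.convex p.1 q.1 a b ha hb hab).trans ?_
    have h1 := mul_le_mul_of_nonneg_left hp (EReal.coe_nonneg.2 ha)
    have h2 := mul_le_mul_of_nonneg_left hq (EReal.coe_nonneg.2 hb)
    refine (add_le_add h1 h2).trans_eq ?_
    simp
  have hmem : ∀ᵐ ω ∂P, (X ω - m, g ω) ∈ s := by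
    filter_upwards [ae_lt_top hpm hpos] with ω hω
    have hne : ℓ (X ω - m) ≠ ⊤ := EReal.toENNReal_ne_top_iff.1 hω.ne
    obtain ⟨a, ha⟩ : ∃ a : ℝ, ℓ (X ω - m) = a :=
      ⟨_, (EReal.coe_toReal hne (hℓ.ne_bot _)).symm⟩
    change ℓ (X ω - m) ≤ (g ω : EReal)
    rw [hg]
    simp only [ha]
    rw [← EReal.coe_neg, EReal.real_coe_toENNReal, EReal.real_coe_toENNReal,
      EReal.coe_le_coe_iff, ENNReal.toReal_ofReal', ENNReal.toReal_ofReal', max_zero_sub_eq_self]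
  have hXi : Integrable (fun ω => X ω - m) P := hX.sub (integrable_const m)
  have h := hsc.integral_mem hs hmem (hXi.prodMk hgi)
  rw [integral_pair hXi hgi, integral_sub hX (integrable_const m)] at h
  simp only [integral_const, probReal_univ, one_smul] at h
  exact le_trans h (by exact_mod_cast hg0)

/-- Shifting `X` by a large constant `n` makes it acceptable: as `n → ∞` the positive parts of
`ℓ (X - n)` vanish in mean, while the mean negative parts have lower limit at least `-ℓ x₀ > 0`
for a point `x₀` with `ℓ x₀ < 0`. -/
lemma acceptSet_nonempty [IsProbabilityMeasure P] (hℓ : IsLossFunction ℓ c)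
    (hX : MemOrliczHeart ℓ P X) : (acceptSet ℓ P X).Nonempty := by
  obtain ⟨x₀, hx₀⟩ := iInf_lt_iff.1 hℓ.inf_lt_zero
  have hlarge : ∀ ω, ∀ᶠ n : ℕ in atTop, ℓ (X ω - fun _ => (n : ℝ)) ≤ ℓ x₀ := by
    intro ω
    have h : ∀ k, ∀ᶠ n : ℕ in atTop, X ω k - x₀ k ≤ n := fun k =>
      tendsto_natCast_atTop_atTop.eventually_ge_atTop _
    filter_upwards [eventually_all.2 h] with n hn
    refine hℓ.mono fun k => ?_
    have := hn k
    simp only [Pi.sub_apply]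
    linarith
  have hmeas := fun n : ℕ => hℓ.measurable_sub hX.1 (fun _ => (n : ℝ))
  have hpos : Tendsto (fun n : ℕ => ∫⁻ ω, (ℓ (X ω - fun _ => (n : ℝ))).toENNReal ∂P) atTop
      (𝓝 0) := by
    have := tendsto_lintegral_of_dominated_convergence (μ := P)
      (F := fun (n : ℕ) ω => (ℓ (X ω - fun _ => (n : ℝ))).toENNReal) (f := fun _ => 0)
      (fun ω => (ℓ |X ω|).toENNReal) (fun n => (hmeas n).ereal_toENNReal)
      (fun n => Eventually.of_forall fun ω => ?_) (hX.lintegral_ne_top hℓ)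
      (Eventually.of_forall fun ω => ?_)
    · simpa using this
    · refine EReal.toENNReal_le_toENNReal (hℓ.mono fun k => ?_)
      have h1 : X ω k ≤ |X ω k| := le_abs_self _
      have h2 : (0 : ℝ) ≤ n := n.cast_nonneg
      simp only [Pi.sub_apply, Pi.abs_apply]
      linarith
    · refine tendsto_const_nhds.congr' ?_
      filter_upwards [hlarge ω] with n hn
      exact (EReal.toENNReal_of_nonpos (hn.trans hx₀.le)).symm
  have hδ : 0 < (-ℓ x₀).toENNReal := by
    rw [EReal.toENNReal_pos_iff, EReal.lt_neg_comm, neg_zero]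
    exact hx₀
  have hneg : (-ℓ x₀).toENNReal ≤
      liminf (fun n : ℕ => ∫⁻ ω, (-ℓ (X ω - fun _ => (n : ℝ))).toENNReal ∂P) atTop := by
    calc (-ℓ x₀).toENNReal = ∫⁻ _, (-ℓ x₀).toENNReal ∂P := by simp
      _ ≤ ∫⁻ ω, liminf (fun n : ℕ => (-ℓ (X ω - fun _ => (n : ℝ))).toENNReal) atTop ∂P := by
          refine lintegral_mono fun ω => le_liminf_of_le (by isBoundedDefault) ?_
          filter_upwards [hlarge ω] with n hn
          exact EReal.toENNReal_le_toENNReal (EReal.neg_le_neg_iff.2 hn)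
      _ ≤ _ := lintegral_liminf_le fun n => (hmeas n).neg.ereal_toENNReal
  obtain ⟨δ, hδ0, hδ1⟩ := exists_between hδ
  obtain ⟨n, hn1, hn2⟩ := ((hpos.eventually_lt_const hδ0).and
    (eventually_lt_of_lt_liminf (hδ1.trans_le hneg))).exists
  exact ⟨_, mem_acceptSet_iff.2 (hn1.trans hn2).le⟩

/-- Closedness uses Fatou's lemma for the positive parts and the reverse Fatou lemma for the negative parts,
which are dominated because `ℓ` is bounded below by an affine function. -/
lemma isClosed_acceptSet [IsProbabilityMeasure P] (hℓ : IsLossFunction ℓ c)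
    (hXm : Measurable X) (hX : Integrable X P) : IsClosed (acceptSet ℓ P X) := by
  refine IsSeqClosed.isClosed fun m m₀ hm hlim => ?_
  rw [mem_acceptSet_iff]
  have hsum : Tendsto (fun n => ∑ k, m n k) atTop (𝓝 (∑ k, m₀ k)) :=
    tendsto_finsetSum _ fun k _ => (tendsto_pi_nhds.1 hlim) k
  obtain ⟨a, ha⟩ := hsum.bddAbove_range
  have hmeas := fun n : ℕ => hℓ.measurable_sub hXm (m n)
  have hsub : ∀ ω, Tendsto (fun n => X ω - m n) atTop (𝓝 (X ω - m₀)) := fun ω =>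
    hlim.const_sub _
  calc ∫⁻ ω, (ℓ (X ω - m₀)).toENNReal ∂P
      ≤ ∫⁻ ω, liminf (fun n => (ℓ (X ω - m n)).toENNReal) atTop ∂P := by
        refine lintegral_mono fun ω => ?_
        have hl : LowerSemicontinuous fun x => (ℓ x).toENNReal :=
          EReal.continuous_toENNReal.comp_lowerSemicontinuous hℓ.lsc
            fun _ _ => EReal.toENNReal_le_toENNReal
        refine le_of_forall_lt fun b hb => ?_
        obtain ⟨b', hb', hb''⟩ := exists_between hb
        refine hb'.trans_le (le_liminf_of_le (by isBoundedDefault) ?_)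
        filter_upwards [(hsub ω).eventually (hl _ _ hb'')] with n hn using hn.le
    _ ≤ liminf (fun n => ∫⁻ ω, (ℓ (X ω - m n)).toENNReal ∂P) atTop :=
        lintegral_liminf_le fun n => (hmeas n).ereal_toENNReal
    _ ≤ liminf (fun n => ∫⁻ ω, (-ℓ (X ω - m n)).toENNReal ∂P) atTop :=
        liminf_le_liminf (Eventually.of_forall fun n => mem_acceptSet_iff.1 (hm n))
    _ ≤ limsup (fun n => ∫⁻ ω, (-ℓ (X ω - m n)).toENNReal ∂P) atTop := liminf_le_limsup
    _ ≤ ∫⁻ ω, limsup (fun n => (-ℓ (X ω - m n)).toENNReal) atTop ∂P :=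
        limsup_lintegral_le (fun ω => ENNReal.ofReal (c + a + ∑ k, |X ω k|))
          (fun n => (hmeas n).neg.ereal_toENNReal)
          (fun n => Eventually.of_forall fun ω =>
            hℓ.neg_toENNReal_sub_le (ha (Set.mem_range_self n)) (X ω))
          (lintegral_bound_ne_top hX _)
    _ ≤ ∫⁻ ω, (-ℓ (X ω - m₀)).toENNReal ∂P := by
        refine lintegral_mono fun ω => ?_
        have hu : UpperSemicontinuous fun x => (-ℓ x).toENNReal :=
          (EReal.continuous_toENNReal.comp continuous_neg).comp_lowerSemicontinuous_antitone
            hℓ.lsc fun _ _ h => EReal.toENNReal_le_toENNReal (EReal.neg_le_neg_iff.2 h)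
        refine le_of_forall_gt fun b hb => ?_
        obtain ⟨b', hb', hb''⟩ := exists_between hb
        refine (limsup_le_of_le (by isBoundedDefault) ?_).trans_lt hb''
        filter_upwards [(hsub ω).eventually (hu _ _ hb')] with n hn using hn.le

/-- Every acceptable allocation of total at most `B` can be replaced by one in a fixed compact
set with the same total: by the constant allocation if `ℓ` depends on the sum only, and by itself
otherwise. -/
lemma exists_compact_representatives [IsProbabilityMeasure P] (hℓ : IsLossFunction ℓ c)
    (hperm : ∀ (π : Equiv.Perm (Fin d)) (x : Fin d → ℝ), ℓ (fun k => x (π k)) = ℓ x)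
    (hXm : Measurable X) (hX : Integrable X P) (B : ℝ) :
    ∃ K : Set (Fin d → ℝ), IsCompact K ∧ ∀ m ∈ acceptSet ℓ P X, ∑ k, m k ≤ B →
      ∃ m' ∈ acceptSet ℓ P X ∩ K, ∑ k, m' k = ∑ k, m k := by
  set e := ∫ ω, X ω ∂P
  rcases hℓ.lineality_or_isBounded hperm with hflat | hbdd
  · have hcont : Continuous fun s : ℝ => (fun _ => s / d : Fin d → ℝ) := by fun_prop
    refine ⟨_, (isCompact_Icc (a := ∑ k, e k - c) (b := B)).image hcont, fun m hm hmB => ?_⟩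
    have hsum : ∑ _k : Fin d, (∑ k, m k) / (d : ℝ) = ∑ k, m k := by
      rcases Nat.eq_zero_or_pos d with rfl | hd
      · simp
      · have : (d : ℝ) ≠ 0 := by positivity
        simp only [Finset.sum_const, Finset.card_univ, Fintype.card_fin, nsmul_eq_mul]
        field_simp
    have hlow : ∑ k, e k - c ≤ ∑ k, m k := by
      have := hℓ.sum_sub_le (t := 0) (by simpa using hℓ.jensen hXm hX hm)
      simp only [Pi.sub_apply, Finset.sum_sub_distrib] at this
      linarith
    refine ⟨fun _ => (∑ k, m k) / d, ⟨?_, _, ⟨hlow, hmB⟩, rfl⟩, hsum⟩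
    have heq : ∀ ω, ℓ (X ω - fun _ => (∑ k, m k) / d) = ℓ (X ω - m) := by
      intro ω
      have := hflat (m - fun _ => (∑ k, m k) / d) (by
        simp only [Pi.sub_apply, Finset.sum_sub_distrib]
        rw [hsum, sub_self]) (X ω - m)
      rw [← this]
      congr 1
      abel
    simpa only [acceptSet, Set.mem_ofPred_eq, heq] using hm
  · obtain ⟨r, hr⟩ := isBounded_iff_forall_norm_le.1 (hbdd (∑ k, e k - B))
    refine ⟨_, isCompact_closedBall e r, fun m hm hmB => ⟨m, ⟨hm, ?_⟩, rfl⟩⟩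
    rw [mem_closedBall_iff_norm']
    refine hr _ ⟨hℓ.jensen hXm hX hm, ?_⟩
    simp only [Pi.sub_apply, Finset.sum_sub_distrib]
    linarith

end Expectation

/-- Theorem 3.3 (existence): if `ℓ` is permutation invariant, a risk allocation exists. -/
theorem riskAllocation_exists
    {Ω : Type*} [MeasurableSpace Ω] (P : Measure Ω) [IsProbabilityMeasure P]
    {d : ℕ} (ℓ : (Fin d → ℝ) → EReal) (c : ℝ) (hℓ : IsLossFunction ℓ c)
    (hperm : ∀ (π : Equiv.Perm (Fin d)) (x : Fin d → ℝ), ℓ (fun k => x (π k)) = ℓ x)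
    (X : Ω → Fin d → ℝ) (hX : MemOrliczHeart ℓ P X) :
    ∃ m ∈ acceptSet ℓ P X, ∑ k, m k = shortfallRisk ℓ P X := by
  have hint := hX.integrable hℓ
  obtain ⟨m₀, hm₀⟩ := acceptSet_nonempty hℓ hX
  obtain ⟨K, hK, hrep⟩ := exists_compact_representatives hℓ hperm hX.1 hint (∑ k, m₀ k)
  have hcomp : IsCompact (acceptSet ℓ P X ∩ K) := hK.inter_left (isClosed_acceptSet hℓ hX.1 hint)
  obtain ⟨m₁, hm₁, hm₁sum⟩ := hrep m₀ hm₀ le_rfl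
  have hcont : Continuous fun m : Fin d → ℝ => ∑ k, m k := by fun_prop
  obtain ⟨m, hm, hmin⟩ := hcomp.exists_isMinOn ⟨m₁, hm₁⟩ hcont.continuousOn
  refine ⟨m, hm.1, Eq.symm ?_⟩
  refine IsLeast.csInf_eq ⟨⟨m, hm.1, rfl⟩, ?_⟩
  rintro _ ⟨p, hp, rfl⟩
  rcases le_total (∑ k, p k) (∑ k, m₀ k) with h | h
  · obtain ⟨p', hp', hsum⟩ := hrep p hp h
    rw [← hsum]
    exact hmin hp'
  · exact (hmin hm₁).trans (hm₁sum.trans_le h)
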